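/- arXiv:1101.2918 — 2 statements merged into one kernel-verified Lean document; each statement's English description precedes it below -/
import Mathlib

section
/- A symmetric monoidal functor f : 𝔸 → 𝔹 between abelian 2-groups is an equivalence of categories if and only if the induced homomorphisms π^0(𝔸) → π^0(𝔹) and π^{-1}(𝔸) → π^{-1}(𝔹) are both isomorphisms of abelian groups. -/
open CategoryTheory MonoidalCategory

universe v u

/-- An abelian 2-group (Picard groupoid): a groupoid equipped with a symmetric monoidal
structure `+` such that for every object `x` the functor `x + (−)` is an equivalence of
categories. -/
class Abelian2Group (C : Type u) [Groupoid.{v} C] [MonoidalCategory C]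
    [SymmetricCategory C] : Prop where
  isEquivalence_tensorLeft : ∀ x : C, (tensorLeft x).IsEquivalence

/-- The setoid on objects of a category identifying isomorphic objects. -/
def isoSetoid (C : Type u) [Category.{v} C] : Setoid C where
  r x y := Nonempty (x ≅ y)
  iseqv := ⟨fun x => ⟨Iso.refl x⟩, fun ⟨e⟩ => ⟨e.symm⟩, fun ⟨e⟩ ⟨f⟩ => ⟨e ≪≫ f⟩⟩

/-- `π^0(C)`: the isomorphism classes of objects of `C`. -/
def pi0 (C : Type u) [Category.{v} C] : Type u := Quotient (isoSetoid C)

/-- The map `π^0(C) → π^0(D)` induced by a functor. -/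
def pi0Map {C : Type u} {D : Type u} [Category.{v} C] [Category.{v} D] (F : C ⥤ D) :
    pi0 C → pi0 D :=
  Quotient.map F.obj (fun _ _ e => e.elim fun i => Nonempty.intro (F.mapIso i))

/-- The map `π^{-1}(C) = Aut(0) → π^{-1}(D) = Aut(0)` induced by a (strong) monoidal
functor, via conjugation with the unit constraint. -/
def pi1Map {C D : Type u} [Category.{v} C] [Category.{v} D] [MonoidalCategory C]
    [MonoidalCategory D] (F : C ⥤ D) [F.Monoidal] : Aut (𝟙_ C) → Aut (𝟙_ D) :=
  fun a => (Functor.Monoidal.εIso F) ≪≫ F.mapIso a ≪≫ (Functor.Monoidal.εIso F).symm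

/-!
The functors `f (x ⊗ -)` and `f x ⊗ f (-)` are isomorphic, so bijectivity of `f` on `Hom(𝟙, 𝟙)`
passes to `Hom(x ⊗ 𝟙, x ⊗ 𝟙)` as soon as tensoring with `x` and with `f x` is fully faithful.
Hence bijectivity on `π^{-1}` gives bijectivity on the automorphisms of every object. In a
groupoid `Hom(x, y)` is either empty or identified with `Hom(x, x)`, and injectivity on `π^0` says
that it is empty exactly when `Hom(f x, f y)` is.
-/

section Pi0

variable {C D : Type u} [Category.{v} C] [Category.{v} D] (F : C ⥤ D)

lemma pi0Map_injective_iff :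
    Function.Injective (pi0Map F) ↔ ∀ x y, Nonempty (F.obj x ≅ F.obj y) → Nonempty (x ≅ y) := by
  refine ⟨fun hF x y e => ?_, fun hF p q => Quotient.inductionOn₂ p q fun x y hxy => ?_⟩
  · exact Quotient.exact (s := isoSetoid C) (hF (Quotient.sound e))
  · exact Quotient.sound (hF x y (Quotient.exact hxy))

lemma pi0Map_surjective_iff_essSurj : Function.Surjective (pi0Map F) ↔ F.EssSurj := by
  refine ⟨fun hF => ⟨fun y => ?_⟩, fun _ q => Quotient.inductionOn q fun y => ?_⟩
  · obtain ⟨p, hp⟩ := hF (Quotient.mk _ y)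
    induction p using Quotient.inductionOn with
    | h x => exact ⟨x, Quotient.exact (s := isoSetoid D) hp⟩
  · exact ⟨Quotient.mk _ (F.objPreimage y), Quotient.sound ⟨F.objObjPreimageIso y⟩⟩

end Pi0

section HomSets

variable {C D : Type*}

lemma map_bijective_of_iso [Category* C] [Category* D] (F : C ⥤ D) {x x' y y' : C}
    (e : x ≅ x') (e' : y ≅ y') (h : Function.Bijective (F.map : (x ⟶ y) → _)) :
    Function.Bijective (F.map : (x' ⟶ y') → _) := by
  have comm : F.map ∘ e.homCongr e' = (F.mapIso e).homCongr (F.mapIso e') ∘ F.map :=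
    funext (F.map_homCongr e e')
  rw [← (e.homCongr e').bijective_comp, comm]
  exact ((F.mapIso e).homCongr (F.mapIso e')).bijective.comp h

lemma mapIso_bijective_iff_map_bijective [Groupoid C] [Groupoid D] (F : C ⥤ D) (x y : C) :
    Function.Bijective (F.mapIso : (x ≅ y) → _) ↔ Function.Bijective (F.map : (x ⟶ y) → _) := by
  have comm : Groupoid.isoEquivHom (F.obj x) (F.obj y) ∘ F.mapIso =
      F.map ∘ Groupoid.isoEquivHom x y := rfl
  rw [← Equiv.comp_bijective _ (Groupoid.isoEquivHom _ _), comm, Equiv.bijective_comp]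

lemma map_bijective_of_map_end_bijective [Category* C] [Groupoid D] (F : C ⥤ D) {x y : C}
    (hiso : Nonempty (F.obj x ≅ F.obj y) → Nonempty (x ≅ y))
    (hend : Function.Bijective (F.map : (x ⟶ x) → _)) :
    Function.Bijective (F.map : (x ⟶ y) → _) := by
  cases isEmpty_or_nonempty (F.obj x ⟶ F.obj y) with
  | inl h => exact ⟨fun g => h.elim (F.map g), h.elim⟩
  | inr h =>
    obtain ⟨e⟩ := hiso (h.map (Groupoid.isoEquivHom _ _).symm)
    exact map_bijective_of_iso F (Iso.refl x) e hend

end HomSets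

section Monoidal

variable {C D : Type*} [Category* C] [Category* D] [MonoidalCategory C] [MonoidalCategory D]
  (F : C ⥤ D) [F.Monoidal] (x : C) [(tensorLeft x).Full]
  [(tensorLeft (F.obj x)).Full] [(tensorLeft (F.obj x)).Faithful]

lemma map_tensor_bijective {y z : C} (h : Function.Bijective (F.map : (y ⟶ z) → _)) :
    Function.Bijective (F.map : (x ⊗ y ⟶ x ⊗ z) → _) := by
  let conj := (Functor.Monoidal.μIso F x y).homCongr (Functor.Monoidal.μIso F x z)
  have comm : F.map ∘ (tensorLeft x).map (X := y) (Y := z) =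
      conj ∘ (tensorLeft (F.obj x)).map ∘ F.map :=
    funext fun g => Functor.Monoidal.map_whiskerLeft F x g
  have hcomp : Function.Bijective (F.map ∘ (tensorLeft x).map (X := y) (Y := z)) := by
    rw [comm]
    exact conj.bijective.comp
      (((Functor.FullyFaithful.ofFullyFaithful (tensorLeft (F.obj x))).map_bijective _ _).comp h)
  exact ⟨hcomp.injective.of_comp_right (tensorLeft x).map_surjective, hcomp.surjective.of_comp⟩

lemma map_end_bijective_of_map_end_unit_bijective
    (h : Function.Bijective (F.map : (𝟙_ C ⟶ 𝟙_ C) → _)) :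
    Function.Bijective (F.map : (x ⟶ x) → _) :=
  map_bijective_of_iso F (ρ_ x) (ρ_ x) (map_tensor_bijective F x h)

end Monoidal

lemma pi1Map_bijective_iff_map_bijective {A B : Type u} [Groupoid.{v} A] [Groupoid.{v} B]
    [MonoidalCategory A] [MonoidalCategory B] (f : A ⥤ B) [f.Monoidal] :
    Function.Bijective (pi1Map f) ↔ Function.Bijective (f.map : (𝟙_ A ⟶ 𝟙_ A) → _) := by
  let ε := Functor.Monoidal.εIso f
  have pi1Map_iff_mapIso : Function.Bijective (pi1Map f) ↔
      Function.Bijective (f.mapIso : (𝟙_ A ≅ 𝟙_ A) → _) :=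
    Equiv.comp_bijective f.mapIso (ε.symm.isoCongr ε.symm)
  exact pi1Map_iff_mapIso.trans (mapIso_bijective_iff_map_bijective f _ _)

theorem abelian2Group_equivalence_iff_pi_iso_general {A B : Type u} [Groupoid.{v} A]
    [Groupoid.{v} B] [MonoidalCategory A] [MonoidalCategory B] [∀ x : A, (tensorLeft x).Full]
    [∀ y : B, (tensorLeft y).Full] [∀ y : B, (tensorLeft y).Faithful]
    (f : A ⥤ B) [f.Monoidal] :
    f.IsEquivalence ↔ Function.Bijective (pi0Map f) ∧ Function.Bijective (pi1Map f) := by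
  rw [pi1Map_bijective_iff_map_bijective, Function.Bijective, pi0Map_injective_iff,
    pi0Map_surjective_iff_essSurj]
  constructor
  · intro _
    exact ⟨⟨fun _ _ ⟨e⟩ => ⟨f.preimageIso e⟩, inferInstance⟩, f.map_injective, f.map_surjective⟩
  · rintro ⟨⟨hiso, hess⟩, hunit⟩
    have hend (x : A) : Function.Bijective (f.map : (x ⟶ x) → _) :=
      map_end_bijective_of_map_end_unit_bijective f x hunit
    obtain ⟨hf⟩ := (Functor.FullyFaithful.nonempty_iff_map_bijective f).mpr
      fun x y => map_bijective_of_map_end_bijective f (hiso x y) (hend x)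
    exact { full := hf.full, faithful := hf.faithful, essSurj := hess }

/-- **Statement 13.** A symmetric monoidal functor `f : 𝔸 ⥤ 𝔹` between abelian 2-groups is an
equivalence of categories if and only if the induced maps `π^0(𝔸) → π^0(𝔹)` and
`π^{-1}(𝔸) → π^{-1}(𝔹)` are both bijective (i.e. isomorphisms of abelian groups). -/
theorem abelian2Group_equivalence_iff_pi_iso {A B : Type u} [Groupoid.{v} A] [Groupoid.{v} B]
    [MonoidalCategory A] [SymmetricCategory A] [MonoidalCategory B] [SymmetricCategory B]
    [Abelian2Group A] [Abelian2Group B] (f : A ⥤ B) [f.Braided] :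
    f.IsEquivalence ↔ Function.Bijective (pi0Map f) ∧ Function.Bijective (pi1Map f) := by
  have := Abelian2Group.isEquivalence_tensorLeft (C := A)
  have := Abelian2Group.isEquivalence_tensorLeft (C := B)
  exact abelian2Group_equivalence_iff_pi_iso_general f
end

section
/- Let 𝔸 be an abelian 2-group with symmetry constraints c_{x,y} : x + y → y + x. For each object a, let q(a) ∈ π^{-1}(𝔸) = Aut(0) be the automorphism corresponding to c_{a,a} ∈ Aut(a + a) under the canonical isomorphism Aut(0) → Aut(a + a) induced by the equivalence (a + a) + (−). Then q(a) depends only on the isomorphism class of a, the resulting map π^0(𝔸) → π^{-1}(𝔸) is a group homomorphism, and it vanishes on 2π^0(𝔸), hence induces a group homomorphism π^0(𝔸)/2π^0(𝔸) → π^{-1}(𝔸). -/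
open CategoryTheory MonoidalCategory

universe v u

variable (C : Type u) [Groupoid.{v} C] [MonoidalCategory C] [SymmetricCategory C]
  [Abelian2Group C]

/-- For an object `a` of an abelian 2-group, the element of `π^{-1} = Aut(0) = End(0)`
corresponding to the symmetry `c_{a,a} ∈ Aut(a + a)` under the canonical isomorphism
`Aut(0) ≅ Aut(a + a)` induced by the equivalence `(a + a) + (−)`. -/
noncomputable def symmetryClass (a : C) : 𝟙_ C ⟶ 𝟙_ C :=
  haveI := Abelian2Group.isEquivalence_tensorLeft (C := C) (a ⊗ a)
  (tensorLeft (a ⊗ a)).preimage ((ρ_ (a ⊗ a)).hom ≫ (β_ a a).hom ≫ (ρ_ (a ⊗ a)).inv)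

/-!
An endomorphism `f` of the unit acts on every object `x` through `x ≅ x + 0`, naturally in `x`
and compatibly with `+`, and `q(a)` is the `f` whose action on `a + a` is `c_{a,a}`. Naturality
along `e + e`, for an isomorphism `e : a ≅ b`, carries `c_{a,a}` to `c_{b,b}`, so `q` is invariant
under isomorphism. The interchange `(a + a) + (b + b) ≅ (a + b) + (a + b)` carries
`c_{a,a} + c_{b,b}` to `c_{a+b,a+b}`, so `q` is additive. Finally `c_{a,a}` is an involution, so
`q(a + a) = 2 q(a) = 0`.
-/

section SymmetryScalar

variable {D : Type u} [Category.{v} D] [MonoidalCategory D]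

/-- The endomorphism of `X ≅ X ⊗ 𝟙_ D` given by an endomorphism of the unit object, as in the
canonical map `Aut(0) → Aut(x + 0) ≅ Aut(x)` of an abelian 2-group. -/
def scalarEnd (X : D) (f : 𝟙_ D ⟶ 𝟙_ D) : X ⟶ X := (ρ_ X).inv ≫ X ◁ f ≫ (ρ_ X).hom

theorem scalarEnd_naturality {X Y : D} (g : X ⟶ Y) (f : 𝟙_ D ⟶ 𝟙_ D) :
    scalarEnd X f ≫ g = g ≫ scalarEnd Y f := by
  simp only [scalarEnd, Category.assoc]
  rw [← rightUnitor_naturality, whisker_exchange_assoc, rightUnitor_inv_naturality_assoc]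

theorem scalarEnd_id (X : D) : scalarEnd X (𝟙 (𝟙_ D)) = 𝟙 X := by
  simp [scalarEnd]

theorem scalarEnd_comp (X : D) (f g : 𝟙_ D ⟶ 𝟙_ D) :
    scalarEnd X (f ≫ g) = scalarEnd X f ≫ scalarEnd X g := by
  simp [scalarEnd]

theorem whiskerLeft_scalarEnd (X Y : D) (f : 𝟙_ D ⟶ 𝟙_ D) :
    X ◁ scalarEnd Y f = scalarEnd (X ⊗ Y) f := by
  simp [scalarEnd]

theorem scalarEnd_whiskerRight [BraidedCategory D] (X Y : D) (f : 𝟙_ D ⟶ 𝟙_ D) :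
    scalarEnd X f ▷ Y = scalarEnd (X ⊗ Y) f := by
  rw [← cancel_mono (β_ X Y).hom, BraidedCategory.braiding_naturality_left,
    whiskerLeft_scalarEnd, scalarEnd_naturality]

theorem scalarEnd_tensorHom_scalarEnd [BraidedCategory D] (X Y : D) (f g : 𝟙_ D ⟶ 𝟙_ D) :
    scalarEnd X f ⊗ₘ scalarEnd Y g = scalarEnd (X ⊗ Y) (f ≫ g) := by
  rw [MonoidalCategory.tensorHom_def, scalarEnd_whiskerRight, whiskerLeft_scalarEnd, scalarEnd_comp]

theorem scalarEnd_injective (X : D) [(tensorLeft X).Faithful] :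
    Function.Injective (scalarEnd X) := fun f g h =>
  (tensorLeft X).map_injective (by simpa [scalarEnd] using h)

/-- `f` represents the self-symmetry `c_{a,a}`: it is a candidate for the element `q(a)` of
`π^{-1}`. Phrasing `q(a)` as a relation makes sense without inverting the functor
`(a + a) + (−)`. -/
def IsSymmetryScalar [BraidedCategory D] (a : D) (f : 𝟙_ D ⟶ 𝟙_ D) : Prop :=
  scalarEnd (a ⊗ a) f = (β_ a a).hom

namespace IsSymmetryScalar

theorem unique [BraidedCategory D] {a : D} [(tensorLeft (a ⊗ a)).Faithful] {f g : 𝟙_ D ⟶ 𝟙_ D}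
    (hf : IsSymmetryScalar a f) (hg : IsSymmetryScalar a g) : f = g :=
  scalarEnd_injective (a ⊗ a) (hf.trans hg.symm)

theorem of_iso [BraidedCategory D] {a b : D} {f : 𝟙_ D ⟶ 𝟙_ D} (hf : IsSymmetryScalar a f)
    (e : a ≅ b) : IsSymmetryScalar b f := by
  have conj : (e.hom ⊗ₘ e.hom) ≫ scalarEnd (b ⊗ b) f = (e.hom ⊗ₘ e.hom) ≫ (β_ b b).hom :=
    calc (e.hom ⊗ₘ e.hom) ≫ scalarEnd (b ⊗ b) f
      _ = scalarEnd (a ⊗ a) f ≫ (e.hom ⊗ₘ e.hom) := (scalarEnd_naturality _ f).symm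
      _ = (β_ a a).hom ≫ (e.hom ⊗ₘ e.hom) := by rw [hf]
      _ = (e.hom ⊗ₘ e.hom) ≫ (β_ b b).hom :=
        (BraidedCategory.braiding_naturality e.hom e.hom).symm
  exact (cancel_epi _).1 conj

variable [SymmetricCategory D]

theorem tensor {a b : D} {f g : 𝟙_ D ⟶ 𝟙_ D} (hf : IsSymmetryScalar a f)
    (hg : IsSymmetryScalar b g) : IsSymmetryScalar (a ⊗ b) (f ≫ g) := by
  have conj : tensorμ a a b b ≫ scalarEnd ((a ⊗ b) ⊗ (a ⊗ b)) (f ≫ g) =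
      tensorμ a a b b ≫ (β_ (a ⊗ b) (a ⊗ b)).hom :=
    calc tensorμ a a b b ≫ scalarEnd ((a ⊗ b) ⊗ (a ⊗ b)) (f ≫ g)
      _ = scalarEnd ((a ⊗ a) ⊗ (b ⊗ b)) (f ≫ g) ≫ tensorμ a a b b :=
        (scalarEnd_naturality _ _).symm
      _ = ((β_ a a).hom ⊗ₘ (β_ b b).hom) ≫ tensorμ a a b b := by
        rw [← scalarEnd_tensorHom_scalarEnd, hf, hg]
      _ = tensorμ a a b b ≫ (β_ (a ⊗ b) (a ⊗ b)).hom :=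
        (SymmetricCategory.tensorμ_braid_swap a b).symm
  have : IsIso (tensorμ a a b b) :=
    ⟨tensorδ a a b b, tensorμ_tensorδ a a b b, tensorδ_tensorμ a a b b⟩
  exact (cancel_epi _).1 conj

theorem comp_self {a : D} [(tensorLeft (a ⊗ a)).Faithful] {f : 𝟙_ D ⟶ 𝟙_ D}
    (hf : IsSymmetryScalar a f) : f ≫ f = 𝟙 (𝟙_ D) := by
  apply scalarEnd_injective (a ⊗ a)
  rw [scalarEnd_comp, hf, SymmetricCategory.symmetry, scalarEnd_id]

end IsSymmetryScalar

theorem symmetryClass_descends_general [SymmetricCategory D]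
    [∀ X : D, (tensorLeft X).Faithful] (q : D → (𝟙_ D ⟶ 𝟙_ D))
    (hq : ∀ a, IsSymmetryScalar a (q a)) :
    (∀ a b : D, Nonempty (a ≅ b) → q a = q b) ∧
    (∀ a b : D, q (a ⊗ b) = q a ≫ q b) ∧
    (∀ a : D, q (a ⊗ a) = 𝟙 (𝟙_ D)) ∧
    (∃ φ : pi0 D → (𝟙_ D ⟶ 𝟙_ D),
      (∀ a : D, φ (Quotient.mk (isoSetoid D) a) = q a) ∧
      (∀ a b : D, φ (Quotient.mk (isoSetoid D) (a ⊗ (b ⊗ b))) =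
        φ (Quotient.mk (isoSetoid D) a))) := by
  have iso_invariant (a b : D) : Nonempty (a ≅ b) → q a = q b := fun ⟨e⟩ =>
    ((hq a).of_iso e).unique (hq b)
  have map_tensor (a b : D) : q (a ⊗ b) = q a ≫ q b := (hq _).unique ((hq a).tensor (hq b))
  have map_tensor_self (a : D) : q (a ⊗ a) = 𝟙 (𝟙_ D) :=
    (map_tensor a a).trans (hq a).comp_self
  have map_tensor_double (a b : D) : q (a ⊗ (b ⊗ b)) = q a := by
    rw [map_tensor, map_tensor_self, Category.comp_id]
  exact ⟨iso_invariant, map_tensor, map_tensor_self,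
    Quotient.lift q iso_invariant, fun _ => rfl, map_tensor_double⟩

end SymmetryScalar

theorem isSymmetryScalar_symmetryClass (a : C) : IsSymmetryScalar a (symmetryClass C a) := by
  have := Abelian2Group.isEquivalence_tensorLeft (a ⊗ a)
  have whiskerLeft_symmetryClass : (a ⊗ a) ◁ symmetryClass C a =
      (ρ_ (a ⊗ a)).hom ≫ (β_ a a).hom ≫ (ρ_ (a ⊗ a)).inv :=
    (tensorLeft (a ⊗ a)).map_preimage _
  simp [IsSymmetryScalar, scalarEnd, whiskerLeft_symmetryClass]

/-- **Statement 16.** For an abelian 2-group `𝔸`, the assignment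
`a ↦ q(a) ∈ π^{-1}(𝔸) = Aut(0)` determined by the symmetry `c_{a,a} ∈ Aut(a+a)` depends only
on the isomorphism class of `a`, defines a group homomorphism `π^0(𝔸) → π^{-1}(𝔸)`, and
vanishes on `2π^0(𝔸)`, hence descends to a group homomorphism
`π^0(𝔸)/2π^0(𝔸) → π^{-1}(𝔸)`. -/
theorem symmetryClass_descends :
    (∀ a b : C, Nonempty (a ≅ b) → symmetryClass C a = symmetryClass C b) ∧
    (∀ a b : C, symmetryClass C (a ⊗ b) = symmetryClass C a ≫ symmetryClass C b) ∧
    (∀ a : C, symmetryClass C (a ⊗ a) = 𝟙 (𝟙_ C)) ∧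
    (∃ φ : pi0 C → (𝟙_ C ⟶ 𝟙_ C),
      (∀ a : C, φ (Quotient.mk (isoSetoid C) a) = symmetryClass C a) ∧
      (∀ a b : C, φ (Quotient.mk (isoSetoid C) (a ⊗ (b ⊗ b))) =
        φ (Quotient.mk (isoSetoid C) a))) := by
  have (X : C) : (tensorLeft X).IsEquivalence := Abelian2Group.isEquivalence_tensorLeft X
  exact symmetryClass_descends_general (symmetryClass C) (isSymmetryScalar_symmetryClass C)
end
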